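/- Let Δ be the bicyclic graph built as follows: take two vertices u and v joined by three internally disjoint paths R₁: u–a₁–a₃–a₅–v, R₂: u–a₂–a₄–a₆–v, and R₃ of length ℓ ≥ 1 with no trees attached at its internal vertices; attach a rooted tree T_i at a_i for 1 ≤ i ≤ 6, and attach no trees at u and v. Assume T₁ ≅ T₂, T₃ ≅ T₄ and T₅ ≅ T₆ as rooted trees, that T₁ is not isomorphic to T₅ as a rooted tree, and that ℓ ≠ 4 or at least one of T₁, T₃, T₅ has more than one vertex. Set G₁ = Aut(T₁)_{root}, G₂ = Aut(T₃)_{root}, G₃ = Aut(T₅)_{root}. Then Aut(Δ) ≅ (G₁ × G₂ × G₃) ≀ Z₂. -/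

import Mathlib

open SimpleGraph

/-- The stabilizer `Aut(G)_v = {f ∈ Aut(G) : f(v) = v}` of a vertex `v` in the automorphism
group of a graph `G`. -/
def autStab {V : Type} (G : SimpleGraph V) (v : V) : Subgroup (G ≃g G) where
  carrier := {f | f v = v}
  one_mem' := rfl
  mul_mem' := by
    intro f g hf hg
    simp only [Set.mem_setOf_eq] at *
    show f (g v) = v
    rw [hg, hf]
  inv_mem' := by
    intro f hf
    simp only [Set.mem_setOf_eq] at *
    calc f⁻¹ v = f⁻¹ (f v) := by rw [hf]
    _ = v := RelIso.inv_apply_self f v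

/-- The swap action of `Z₂` on `G × G`. -/
def swapHom (G : Type) [Group G] : Multiplicative (ZMod 2) →* MulAut (G × G) where
  toFun g := if Multiplicative.toAdd g = 1 then (MulEquiv.prodComm : G × G ≃* G × G) else 1
  map_one' := by
    show (if (0 : ZMod 2) = 1 then (MulEquiv.prodComm : G × G ≃* G × G) else 1) = 1
    norm_num
  map_mul' x y := by
    have h2 : ∀ z : ZMod 2, z = 0 ∨ z = 1 := by decide
    have hs : (MulEquiv.prodComm : G × G ≃* G × G) * MulEquiv.prodComm = 1 := by
      ext z <;> rfl
    show (if Multiplicative.toAdd x + Multiplicative.toAdd y = 1 then _ else _) = _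
    rcases h2 (Multiplicative.toAdd x) with hx | hx <;>
      rcases h2 (Multiplicative.toAdd y) with hy | hy <;>
        simp [hx, hy, hs, show (1 + 1 : ZMod 2) = 0 from rfl,
          show (0 : ZMod 2) ≠ 1 by decide, show (1 : ZMod 2) ≠ 0 by decide]

/-- The wreath product `G ≀ Z₂ = (G × G) ⋊ Z₂`, where the nontrivial element of `Z₂`
swaps the two coordinates. -/
def wreathZ2 (G : Type) [Group G] : Type :=
  (G × G) ⋊[swapHom G] Multiplicative (ZMod 2)

instance (G : Type) [Group G] : Group (wreathZ2 G) :=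
  inferInstanceAs (Group ((G × G) ⋊[swapHom G] Multiplicative (ZMod 2)))

/-- The graph obtained from `base` by attaching, for each `i : ι`, the rooted tree
`(T i, t i)` at the vertex `x i` (identifying the root `t i` with `x i`); the attached trees
are pairwise disjoint and disjoint from `base` except at the attachment vertices. -/
def attachTrees {B : Type} (base : SimpleGraph B) {ι : Type} {W : ι → Type}
    (T : ∀ i, SimpleGraph (W i)) (t : ∀ i, W i) (x : ι → B) :
    SimpleGraph (B ⊕ Σ i, {w : W i // w ≠ t i}) where
  Adj a b :=
    match a, b with
    | .inl a, .inl b => base.Adj a b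
    | .inl a, .inr ⟨i, w⟩ => a = x i ∧ (T i).Adj (t i) w.1
    | .inr ⟨i, w⟩, .inl b => b = x i ∧ (T i).Adj (t i) w.1
    | .inr ⟨i, w⟩, .inr ⟨j, w'⟩ => ∃ h : i = j, (T j).Adj (h ▸ w).1 w'.1
  symm := by
    constructor
    rintro (a | ⟨i, w⟩) (b | ⟨j, w'⟩) h
    · exact base.symm.symm _ _ h
    · exact h
    · exact h
    · obtain ⟨rfl, hw⟩ := h
      exact ⟨rfl, (T i).symm.symm _ _ hw⟩
  loopless := by
    constructor
    rintro (a | ⟨i, w⟩) h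
    · exact base.loopless.irrefl a h
    · obtain ⟨h', hw⟩ := h
      exact (T i).loopless.irrefl _ hw

/-- Vertices of a theta graph: two hub vertices `u`, `v` joined by three internally disjoint
paths having `p`, `q` and `r` internal vertices respectively. -/
inductive ThetaV (p q r : ℕ) : Type where
  | u : ThetaV p q r
  | v : ThetaV p q r
  | x1 : Fin p → ThetaV p q r
  | x2 : Fin q → ThetaV p q r
  | x3 : Fin r → ThetaV p q r
  deriving DecidableEq

/-- The theta graph: the vertices `u` and `v` joined by three internally disjoint paths of
lengths `p + 1`, `q + 1` and `r + 1`; the internal vertices of each path are indexed starting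
from the end adjacent to `v`. -/
def theta (p q r : ℕ) : SimpleGraph (ThetaV p q r) where
  Adj a b :=
    match a, b with
    | .u, .v => p = 0 ∨ q = 0 ∨ r = 0
    | .v, .u => p = 0 ∨ q = 0 ∨ r = 0
    | .v, .x1 i => i.val = 0
    | .x1 i, .v => i.val = 0
    | .u, .x1 i => i.val = p - 1
    | .x1 i, .u => i.val = p - 1
    | .v, .x2 i => i.val = 0
    | .x2 i, .v => i.val = 0
    | .u, .x2 i => i.val = q - 1
    | .x2 i, .u => i.val = q - 1
    | .v, .x3 i => i.val = 0
    | .x3 i, .v => i.val = 0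
    | .u, .x3 i => i.val = r - 1
    | .x3 i, .u => i.val = r - 1
    | .x1 i, .x1 j => i.val + 1 = j.val ∨ j.val + 1 = i.val
    | .x2 i, .x2 j => i.val + 1 = j.val ∨ j.val + 1 = i.val
    | .x3 i, .x3 j => i.val + 1 = j.val ∨ j.val + 1 = i.val
    | _, _ => False
  symm := by
    constructor
    intro a b h
    cases a <;> cases b <;> simp only [] at h ⊢ <;> tauto
  loopless := by
    constructor
    intro a h
    cases a <;> simp only [] at h <;> omega

/-- Index type for the six trees attached in Lemma 2.4: `T₁, T₃, T₅` (at `a₁, a₃, a₅` on the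
first path) and `T₂, T₄, T₆` (at `a₂, a₄, a₆` on the second path). -/
abbrev Stmt4Index : Type := Fin 3 ⊕ Fin 3

/-- The family of vertex types of the six attached trees. -/
def stmt4W (WA WB : Fin 3 → Type) : Stmt4Index → Type := Sum.elim WA WB

/-- The family of the six attached trees. -/
def stmt4T {WA WB : Fin 3 → Type}
    (TA : ∀ j, SimpleGraph (WA j)) (TB : ∀ j, SimpleGraph (WB j)) :
    ∀ i, SimpleGraph (stmt4W WA WB i) :=
  fun i =>
    match i with
    | .inl j => TA j
    | .inr j => TB j

/-- The family of roots of the six attached trees. -/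
def stmt4root {WA WB : Fin 3 → Type} (tA : ∀ j, WA j) (tB : ∀ j, WB j) :
    ∀ i, stmt4W WA WB i :=
  fun i =>
    match i with
    | .inl j => tA j
    | .inr j => tB j

/-- Attachment vertices on the theta graph with hub vertices `u`, `v`, paths
`R₁ : u–a₁–a₃–a₅–v`, `R₂ : u–a₂–a₄–a₆–v` and `R₃` of length `m + 1`:
the tree `T_{2j+1}` is attached at `a_{2j+1}` and `T_{2j+2}` at `a_{2j+2}`;
no trees are attached at `u` and `v`. -/
def stmt4x (m : ℕ) : Stmt4Index → ThetaV 3 3 m :=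
  fun i =>
    match i with
    | .inl j => ThetaV.x1 ⟨2 - j.1, by omega⟩
    | .inr j => ThetaV.x2 ⟨2 - j.1, by omega⟩

/-- The bicyclic graph of Lemma 2.4. -/
def stmt4Graph (m : ℕ) {WA WB : Fin 3 → Type}
    (TA : ∀ j, SimpleGraph (WA j)) (TB : ∀ j, SimpleGraph (WB j))
    (tA : ∀ j, WA j) (tB : ∀ j, WB j) :=
  attachTrees (theta 3 3 m) (stmt4T TA TB) (stmt4root tA tB) (stmt4x m)

namespace SixTrees

/-- In a tree the neighbour closer to the root is unique. -/
theorem parent_unique {V : Type} {T : SimpleGraph V} (hT : T.IsTree) (t : V) {w a b : V}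
    (ha : T.Adj a w) (hb : T.Adj b w) (hda : T.dist t a ≤ T.dist t w)
    (hdb : T.dist t b ≤ T.dist t w) : a = b := by
  have key : ∀ c, T.Adj c w → T.dist t c ≤ T.dist t w →
      ∃ p : T.Walk t w, p.IsPath ∧ p.penultimate = c := by
    intro c hc hd
    have h1 := hT.dist_eq_dist_add_one_of_adj t hc
    obtain ⟨p, hp⟩ := hT.connected.exists_walk_length_eq_dist t c
    refine ⟨p.concat hc, ?_, by simp⟩
    apply SimpleGraph.Walk.isPath_of_length_eq_dist
    rw [SimpleGraph.Walk.length_concat]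
    omega
  obtain ⟨p, hp, rfl⟩ := key a ha hda
  obtain ⟨q, hq, rfl⟩ := key b hb hdb
  rw [(hT.existsUnique_path t w).unique hp hq]

/-- Every non-root vertex of a tree has a parent. -/
theorem exists_parent {V : Type} {T : SimpleGraph V} (hT : T.IsTree) (t : V) {w : V}
    (hw : w ≠ t) : ∃ p, T.Adj p w ∧ T.dist t p < T.dist t w := by
  obtain ⟨p, hp, hl⟩ := hT.connected.exists_path_of_dist t w
  have hnn : ¬ p.Nil := fun h => hw h.eq.symm
  refine ⟨p.penultimate, p.adj_penultimate hnn, ?_⟩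
  have h := SimpleGraph.dist_le p.dropLast
  have h2 : 0 < p.length := by
    rw [← SimpleGraph.Walk.length_eq_zero_iff] at hnn
    omega
  have : p.dropLast.length + 1 = p.length := by
    simp; omega
  omega

theorem tree_induction {V : Type} {T : SimpleGraph V} (hT : T.IsTree) (t : V) {P : V → Prop}
    (h0 : P t) (hs : ∀ p w, w ≠ t → T.Adj p w → P p → P w) (w : V) : P w := by
  generalize hn : T.dist t w = n
  induction n using Nat.strong_induction_on generalizing w with
  | _ n ih =>
    by_cases hw : w = t
    · exact hw ▸ h0
    · obtain ⟨p, hp, hd⟩ := exists_parent hT t hw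
      exact hs p w hw hp (ih _ (hn ▸ hd) p rfl)

variable {m : ℕ} {W : Fin 3 → Type}

/-- Vertices of the model graph. -/
abbrev MV (m : ℕ) (W : Fin 3 → Type) : Type := Fin (m + 2) ⊕ (Bool × Σ j, W j)

/-- The vertex `w` of the `j`-th tree on branch `b`. -/
abbrev br (m : ℕ) {W : Fin 3 → Type} (b : Bool) (j : Fin 3) (w : W j) : MV m W := .inr (b, ⟨j, w⟩)

/-- A vertex of the third path, hubs included. -/
abbrev sp (W : Fin 3 → Type) (c : Fin (m + 2)) : MV m W := .inl c

/-- One-directional adjacency of the model. -/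
inductive MAdj (T : ∀ j, SimpleGraph (W j)) (t : ∀ j, W j) : MV m W → MV m W → Prop
  | path (c d : Fin (m + 2)) : c.val + 1 = d.val ∨ d.val + 1 = c.val → MAdj T t (sp W c) (sp W d)
  | tree (b : Bool) (j : Fin 3) (w w' : W j) : (T j).Adj w w' → MAdj T t (br m b j w) (br m b j w')
  | spine (b : Bool) (i j : Fin 3) (w : W i) (w' : W j) : w = t i → w' = t j →
      (i.val + 1 = j.val ∨ j.val + 1 = i.val) → MAdj T t (br m b i w) (br m b j w')
  | hub (b : Bool) (c : Fin (m + 2)) (j : Fin 3) (w : W j) : w = t j →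
      ((c.val = 0 ∧ j.val = 2) ∨ (c.val = m + 1 ∧ j.val = 0)) → MAdj T t (sp W c) (br m b j w)
  | hub' (b : Bool) (c : Fin (m + 2)) (j : Fin 3) (w : W j) : w = t j →
      ((c.val = 0 ∧ j.val = 2) ∨ (c.val = m + 1 ∧ j.val = 0)) → MAdj T t (br m b j w) (sp W c)

/-- The model graph. -/
def model (m : ℕ) (T : ∀ j, SimpleGraph (W j)) (t : ∀ j, W j) : SimpleGraph (MV m W) where
  Adj := MAdj T t
  symm := by
    constructor
    intro a b h
    cases h with
    | path c d h => exact .path _ _ h.symm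
    | tree b j w w' h => exact .tree _ _ _ _ h.symm
    | spine b i j w w' h h' h'' => exact .spine _ _ _ _ _ h' h h''.symm
    | hub b c j w h h' => exact .hub' _ _ _ _ h h'
    | hub' b c j w h h' => exact .hub _ _ _ _ h h'
  loopless := by
    constructor
    intro a h
    rcases a with c | ⟨b, j, w⟩
    · cases h with
      | path c d h => omega
    · cases h with
      | tree b j w w' h => exact h.ne rfl
      | spine b i j w w' h h' h'' => omega

variable {T : ∀ j, SimpleGraph (W j)} {t : ∀ j, W j}

theorem adj_path {c d : Fin (m + 2)} : (model m T t).Adj (sp W c) (sp W d) ↔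
    (c.val + 1 = d.val ∨ d.val + 1 = c.val) :=
  ⟨fun h => by cases h with | path c d h => exact h, fun h => .path _ _ h⟩

theorem adj_hub {b : Bool} {c : Fin (m + 2)} {j : Fin 3} {w : W j} :
    (model m T t).Adj (sp W c) (br m b j w) ↔
    w = t j ∧ ((c.val = 0 ∧ j.val = 2) ∨ (c.val = m + 1 ∧ j.val = 0)) :=
  ⟨fun h => by cases h with | hub b c j w h h' => exact ⟨h, h'⟩, fun h => .hub _ _ _ _ h.1 h.2⟩

theorem adj_tree {b : Bool} {j : Fin 3} {w w' : W j} :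
    (model m T t).Adj (br m b j w) (br m b j w') ↔ (T j).Adj w w' :=
  ⟨fun h => by
    cases h with
    | tree b j w w' h => exact h
    | spine b i j w w' h h' h'' => omega, fun h => .tree _ _ _ _ h⟩

theorem adj_spine {b : Bool} {i j : Fin 3} {w : W i} {w' : W j} (hij : i ≠ j) :
    (model m T t).Adj (br m b i w) (br m b j w') ↔
      w = t i ∧ w' = t j ∧ (i.val + 1 = j.val ∨ j.val + 1 = i.val) :=
  ⟨fun h => by
    cases h with
    | tree b j w w' h => exact absurd rfl hij
    | spine b i j w w' h h' h'' => exact ⟨h, h', h''⟩, fun h => .spine _ _ _ _ _ h.1 h.2.1 h.2.2⟩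

theorem adj_bool {b b' : Bool} {i j : Fin 3} {w : W i} {w' : W j}
    (h : (model m T t).Adj (br m b i w) (br m b' j w')) : b = b' := by
  cases h <;> rfl

/-- Core vertices. -/
def IsCore (t : ∀ j, W j) : MV m W → Prop
  | .inl _ => True
  | .inr (_, ⟨j, w⟩) => w = t j

/-- Depth. -/
noncomputable def depth (T : ∀ j, SimpleGraph (W j)) (t : ∀ j, W j) : MV m W → ℕ
  | .inl _ => 0
  | .inr (_, ⟨j, w⟩) => (T j).dist (t j) w

theorem core_of_dense [∀ j, Finite (W j)] (hT : ∀ j, (T j).IsTree) (S : Set (MV m W))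
    (hS : ∀ x ∈ S, ∃ y ∈ S, ∃ z ∈ S, y ≠ z ∧ (model m T t).Adj y x ∧ (model m T t).Adj z x) :
    ∀ x ∈ S, IsCore t x := by
  intro x hx
  by_contra hc
  obtain ⟨⟨y, hy⟩, hmax⟩ := Set.exists_max_image (S \ {x | IsCore t x}) (depth T t)
    (Set.toFinite _) ⟨x, hx, hc⟩ |>.elim fun y h =>
      (⟨⟨y, h.1⟩, h.2⟩ : ∃ y : ↥(S \ {x | IsCore t x}), ∀ z ∈ S \ {x | IsCore t x},
        depth T t z ≤ depth T t y.1)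
  rcases y with c | ⟨b, j, w⟩
  · exact hy.2 trivial
  have hw : w ≠ t j := hy.2
  obtain ⟨p, hp, q, hq, hpq, hpa, hqa⟩ := hS _ hy.1
  have key : ∀ p ∈ S, (model m T t).Adj p (br m b j w) → ∃ w', p = br m b j w' ∧
      (T j).Adj w' w ∧ (T j).dist (t j) w' ≤ (T j).dist (t j) w := by
    intro p hp h
    cases h with
    | tree b j w w' h =>
      refine ⟨w, rfl, h, ?_⟩
      by_cases hw' : w = t j
      · subst hw'; simp
      · exact hmax _ ⟨hp, hw'⟩
    | spine b i j w w' h h' h'' => exact absurd h' hw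
    | hub b c j w h h' => exact absurd h hw
  obtain ⟨w1, rfl, h1, h1'⟩ := key p hp hpa
  obtain ⟨w2, rfl, h2, h2'⟩ := key q hq hqa
  exact hpq (by rw [parent_unique (hT j) (t j) h1 h2 h1' h2'])

theorem core_dense (x : MV m W) (hx : IsCore t x) : ∃ y, IsCore t y ∧ ∃ z, IsCore t z ∧
    y ≠ z ∧ (model m T t).Adj y x ∧ (model m T t).Adj z x := by
  rcases x with c | ⟨b, j, w⟩
  · by_cases h0 : c.val = 0
    · exact ⟨br m true 2 (t 2), rfl, br m false 2 (t 2), rfl, by simp,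
        (adj_hub.2 ⟨rfl, Or.inl ⟨h0, rfl⟩⟩).symm, (adj_hub.2 ⟨rfl, Or.inl ⟨h0, rfl⟩⟩).symm⟩
    by_cases h1 : c.val = m + 1
    · exact ⟨br m true 0 (t 0), rfl, br m false 0 (t 0), rfl, by simp,
        (adj_hub.2 ⟨rfl, Or.inr ⟨h1, rfl⟩⟩).symm, (adj_hub.2 ⟨rfl, Or.inr ⟨h1, rfl⟩⟩).symm⟩
    refine ⟨sp W ⟨c.val - 1, by omega⟩, trivial, sp W ⟨c.val + 1, by omega⟩, trivial, ?_,
      adj_path.2 ?_, adj_path.2 ?_⟩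
    · intro h
      have := congrArg Fin.val (Sum.inl.inj h)
      simp at this
    · left; simp; omega
    · right; simp
  · obtain rfl : w = t j := hx
    fin_cases j
    · exact ⟨sp W (Fin.last _), trivial, br m b 1 (t 1), rfl, by simp,
        adj_hub.2 ⟨rfl, Or.inr ⟨rfl, rfl⟩⟩, (adj_spine (by decide)).2 ⟨rfl, rfl, Or.inr rfl⟩⟩
    · exact ⟨br m b 0 (t 0), rfl, br m b 2 (t 2), rfl, by simp,
        (adj_spine (by decide)).2 ⟨rfl, rfl, Or.inl rfl⟩,
        (adj_spine (by decide)).2 ⟨rfl, rfl, Or.inr rfl⟩⟩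
    · exact ⟨sp W 0, trivial, br m b 1 (t 1), rfl, by simp,
        adj_hub.2 ⟨rfl, Or.inl ⟨rfl, rfl⟩⟩, (adj_spine (by decide)).2 ⟨rfl, rfl, Or.inl rfl⟩⟩

theorem core_map [∀ j, Finite (W j)] (hT : ∀ j, (T j).IsTree)
    (f : model m T t ≃g model m T t) (x : MV m W) (hx : IsCore t x) : IsCore t (f x) := by
  refine core_of_dense hT (f '' {x | IsCore t x}) ?_ (f x) ⟨x, hx, rfl⟩
  rintro _ ⟨x, hx, rfl⟩
  obtain ⟨y, hy, z, hz, hyz, h1, h2⟩ := core_dense (T := T) x hx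
  exact ⟨f y, ⟨y, hy, rfl⟩, f z, ⟨z, hz, rfl⟩, fun h => hyz (f.injective h),
    f.map_adj_iff.2 h1, f.map_adj_iff.2 h2⟩

theorem core_iff [∀ j, Finite (W j)] (hT : ∀ j, (T j).IsTree)
    (f : model m T t ≃g model m T t) (x : MV m W) : IsCore t (f x) ↔ IsCore t x :=
  ⟨fun h => by simpa using core_map hT f.symm _ h, core_map hT f x⟩

theorem nbr_sp {c : Fin (m + 2)} {y : MV m W} (h : (model m T t).Adj (sp W c) y) :
    (∃ d, y = sp W d ∧ (c.val + 1 = d.val ∨ d.val + 1 = c.val)) ∨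
    (∃ b, y = br m b 2 (t 2) ∧ c.val = 0) ∨ (∃ b, y = br m b 0 (t 0) ∧ c.val = m + 1) := by
  cases h with
  | path c d h => exact Or.inl ⟨d, rfl, h⟩
  | hub b c j w h h' =>
    subst h
    rcases h' with ⟨h1, h2⟩ | ⟨h1, h2⟩
    · obtain rfl : j = 2 := Fin.ext h2
      exact Or.inr (Or.inl ⟨b, rfl, h1⟩)
    · obtain rfl : j = 0 := Fin.ext h2
      exact Or.inr (Or.inr ⟨b, rfl, h1⟩)

theorem nbr_br {b : Bool} {j : Fin 3} {y : MV m W} (h : (model m T t).Adj (br m b j (t j)) y)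
    (hy : IsCore t y) :
    (∃ i, y = br m b i (t i) ∧ (i.val + 1 = j.val ∨ j.val + 1 = i.val)) ∨
    (∃ c, y = sp W c ∧ ((c.val = 0 ∧ j.val = 2) ∨ (c.val = m + 1 ∧ j.val = 0))) := by
  generalize hw : t j = w at h
  cases h with
  | tree b j w w' h =>
    obtain rfl : w' = t j := hy
    exact absurd hw h.ne'
  | spine b i j w w' h h' h'' => subst h'; exact Or.inl ⟨j, rfl, h''.symm⟩
  | hub' b c j w h h' => exact Or.inr ⟨c, rfl, h'⟩

theorem nbr_br0 {b : Bool} {y : MV m W} (h : (model m T t).Adj (br m b 0 (t 0)) y)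
    (hy : IsCore t y) : y = sp W (Fin.last _) ∨ y = br m b 1 (t 1) := by
  rcases nbr_br h hy with ⟨i, rfl, hi⟩ | ⟨c, rfl, hc⟩
  · right
    obtain rfl : i = 1 := Fin.ext (by simp at hi ⊢; omega)
    rfl
  · left
    obtain rfl : c = Fin.last _ := Fin.ext (by simpa using hc)
    rfl

theorem nbr_br1 {b : Bool} {y : MV m W} (h : (model m T t).Adj (br m b 1 (t 1)) y)
    (hy : IsCore t y) : y = br m b 0 (t 0) ∨ y = br m b 2 (t 2) := by
  rcases nbr_br h hy with ⟨i, rfl, hi⟩ | ⟨c, rfl, hc⟩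
  · fin_cases i
    · left; rfl
    · simp at hi
    · right; rfl
  · simp at hc

theorem nbr_br2 {b : Bool} {y : MV m W} (h : (model m T t).Adj (br m b 2 (t 2)) y)
    (hy : IsCore t y) : y = sp W 0 ∨ y = br m b 1 (t 1) := by
  rcases nbr_br h hy with ⟨i, rfl, hi⟩ | ⟨c, rfl, hc⟩
  · right
    obtain rfl : i = 1 := Fin.ext (by simp at hi ⊢; omega)
    rfl
  · left
    obtain rfl : c = 0 := Fin.ext (by simpa using hc)
    rfl

theorem hub_of_three {x y z w : MV m W} (hx : IsCore t x) (hy : IsCore t y) (hz : IsCore t z)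
    (hw : IsCore t w) (hyz : y ≠ z) (hyw : y ≠ w) (hzw : z ≠ w)
    (h1 : (model m T t).Adj x y) (h2 : (model m T t).Adj x z) (h3 : (model m T t).Adj x w) :
    x = sp W 0 ∨ x = sp W (Fin.last _) := by
  rcases x with c | ⟨b, j, v⟩
  · by_cases h0 : c.val = 0
    · left; exact congrArg Sum.inl (Fin.ext h0)
    by_cases h0' : c.val = m + 1
    · right; exact congrArg Sum.inl (Fin.ext h0')
    exfalso
    rcases nbr_sp h1 with ⟨d1, rfl, e1⟩ | ⟨_, _, h⟩ | ⟨_, _, h⟩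
    · rcases nbr_sp h2 with ⟨d2, rfl, e2⟩ | ⟨_, _, h⟩ | ⟨_, _, h⟩
      · rcases nbr_sp h3 with ⟨d3, rfl, e3⟩ | ⟨_, _, h⟩ | ⟨_, _, h⟩
        · have i1 : d1.val ≠ d2.val := fun h => hyz (congrArg Sum.inl (Fin.ext h))
          have i2 : d1.val ≠ d3.val := fun h => hyw (congrArg Sum.inl (Fin.ext h))
          have i3 : d2.val ≠ d3.val := fun h => hzw (congrArg Sum.inl (Fin.ext h))
          omega
        · exact h0 h
        · exact h0' h
      · exact h0 h
      · exact h0' h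
    · exact h0 h
    · exact h0' h
  · exfalso
    obtain rfl : v = t j := hx
    fin_cases j
    · rcases nbr_br0 h1 hy with rfl | rfl <;> rcases nbr_br0 h2 hz with rfl | rfl <;>
        rcases nbr_br0 h3 hw with rfl | rfl <;> contradiction
    · rcases nbr_br1 h1 hy with rfl | rfl <;> rcases nbr_br1 h2 hz with rfl | rfl <;>
        rcases nbr_br1 h3 hw with rfl | rfl <;> contradiction
    · rcases nbr_br2 h1 hy with rfl | rfl <;> rcases nbr_br2 h2 hz with rfl | rfl <;>
        rcases nbr_br2 h3 hw with rfl | rfl <;> contradiction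

section aut

variable [∀ j, Finite (W j)]

theorem map_hub_aux (x y z w : MV m W) (hx : IsCore t x) (hy : IsCore t y) (hz : IsCore t z)
    (hw : IsCore t w) (hyz : y ≠ z) (hyw : y ≠ w) (hzw : z ≠ w)
    (h1 : (model m T t).Adj x y) (h2 : (model m T t).Adj x z) (h3 : (model m T t).Adj x w)
    (hT : ∀ j, (T j).IsTree) (f : model m T t ≃g model m T t) :
    f x = sp W 0 ∨ f x = sp W (Fin.last _) :=
  hub_of_three (core_map hT f x hx) (core_map hT f y hy) (core_map hT f z hz)
    (core_map hT f w hw) (fun h => hyz (f.injective h)) (fun h => hyw (f.injective h))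
    (fun h => hzw (f.injective h)) (f.map_adj_iff.2 h1) (f.map_adj_iff.2 h2) (f.map_adj_iff.2 h3)

theorem map_hub0 (hT : ∀ j, (T j).IsTree) (f : model m T t ≃g model m T t)
    : f (sp W 0) = sp W 0 ∨ f (sp W 0) = sp W (Fin.last _) :=
  map_hub_aux (sp W 0) (sp W 1) (br m true 2 (t 2)) (br m false 2 (t 2)) trivial trivial rfl rfl
    (by simp) (by simp) (by simp) (adj_path.2 (Or.inl (by simp)))
    (adj_hub.2 ⟨rfl, Or.inl ⟨rfl, rfl⟩⟩) (adj_hub.2 ⟨rfl, Or.inl ⟨rfl, rfl⟩⟩) hT f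

theorem map_hubl (hT : ∀ j, (T j).IsTree) (f : model m T t ≃g model m T t)
    : f (sp W (Fin.last _)) = sp W 0 ∨ f (sp W (Fin.last _)) = sp W (Fin.last _) :=
  map_hub_aux (sp W (Fin.last _)) (sp W ⟨m, by omega⟩) (br m true 0 (t 0)) (br m false 0 (t 0))
    trivial trivial rfl rfl
    (by simp) (by simp) (by simp) (adj_path.2 (Or.inr (by simp)))
    (adj_hub.2 ⟨rfl, Or.inr ⟨rfl, rfl⟩⟩) (adj_hub.2 ⟨rfl, Or.inr ⟨rfl, rfl⟩⟩) hT f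

/-- A tree whose root is sent to the third path is trivial. -/
theorem trivial_of_map (hT : ∀ j, (T j).IsTree) (f : model m T t ≃g model m T t)
    {b : Bool} {j : Fin 3} {c : Fin (m + 2)}
    (h : f (br m b j (t j)) = sp W c) (w : W j) : w = t j := by
  refine tree_induction (P := fun w => w = t j) (hT j) (t j) rfl ?_ w
  rintro p w hw hpw rfl
  have h1 : (model m T t).Adj (f (br m b j (t j))) (f (br m b j w)) :=
    f.map_adj_iff.2 (adj_tree.2 hpw)
  rw [h] at h1
  have hc : ¬ IsCore t (f (br m b j w)) := fun h => hw ((core_iff hT f _).1 h)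
  rcases nbr_sp h1 with ⟨d, e, _⟩ | ⟨_, e, _⟩ | ⟨_, e, _⟩ <;> rw [e] at hc
  · exact absurd trivial hc
  · exact absurd rfl hc
  · exact absurd rfl hc

theorem tree_map_exists (hT : ∀ j, (T j).IsTree) (f : model m T t ≃g model m T t)
    {b b' : Bool} {j j' : Fin 3}
    (h : f (br m b j (t j)) = br m b' j' (t j')) (w : W j) :
    ∃ w', f (br m b j w) = br m b' j' w' := by
  refine tree_induction (P := fun w => ∃ w', f (br m b j w) = br m b' j' w') (hT j) (t j)
    ⟨_, h⟩ ?_ w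
  rintro p w hw hpw ⟨p', hp⟩
  have h1 : (model m T t).Adj (f (br m b j p)) (f (br m b j w)) :=
    f.map_adj_iff.2 (adj_tree.2 hpw)
  rw [hp] at h1
  have hc : ¬ IsCore t (f (br m b j w)) := fun h => hw ((core_iff hT f _).1 h)
  generalize f (br m b j w) = y at h1 hc
  cases h1 with
  | tree b j w w' h => exact ⟨_, rfl⟩
  | spine b i j w w' h h' h'' => exact absurd h' hc
  | hub' b c j w h h' => exact absurd trivial hc

theorem tree_iso (hT : ∀ j, (T j).IsTree) (f : model m T t ≃g model m T t)
    {b b' : Bool} {j j' : Fin 3}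
    (h : f (br m b j (t j)) = br m b' j' (t j')) :
    ∃ e : T j ≃g T j', e (t j) = t j' ∧ ∀ w, f (br m b j w) = br m b' j' (e w) := by
  have h' : f.symm (br m b' j' (t j')) = br m b j (t j) := by rw [← h]; simp
  choose F hF using tree_map_exists hT f h
  choose G hG using tree_map_exists hT f.symm h'
  have brinj : ∀ (b : Bool) (j : Fin 3) (w w' : W j), br m b j w = br m b j w' → w = w' := by
    intro b j w w' h
    simpa [br] using h
  refine ⟨⟨⟨F, G, fun w => ?_, fun w => ?_⟩, ?_⟩, ?_, hF⟩
  · apply brinj b j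
    rw [← hG, ← hF]; simp
  · apply brinj b' j'
    rw [← hF, ← hG]; simp
  · intro a a'
    change (T j').Adj (F a) (F a') ↔ _
    rw [← adj_tree (m := m) (t := t) (b := b'), ← hF, ← hF, f.map_adj_iff, adj_tree]
  · apply brinj b' j'
    change br m b' j' (F (t j)) = _
    rw [← hF, h]

end aut

theorem core_br (b : Bool) (j : Fin 3) : IsCore t (br m b j (t j)) := rfl

theorem core_sp (c : Fin (m + 2)) : IsCore t (sp W c) := trivial

theorem adj_last (b : Bool) : (model m T t).Adj (sp W (Fin.last _)) (br m b 0 (t 0)) :=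
  adj_hub.2 ⟨rfl, Or.inr ⟨rfl, rfl⟩⟩

theorem adj_01 (b : Bool) : (model m T t).Adj (br m b 0 (t 0)) (br m b 1 (t 1)) :=
  (adj_spine (by decide)).2 ⟨rfl, rfl, Or.inl rfl⟩

theorem adj_12 (b : Bool) : (model m T t).Adj (br m b 1 (t 1)) (br m b 2 (t 2)) :=
  (adj_spine (by decide)).2 ⟨rfl, rfl, Or.inl rfl⟩

section classify

variable [∀ j, Finite (W j)]

/-- Trees `T 0` and `T 2` cannot both be trivial. -/
theorem not_both_trivial (hne : ∀ e : T 0 ≃g T 2, e (t 0) ≠ t 2)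
    (h0 : ∀ w, w = t 0) (h2 : ∀ w, w = t 2) : False := by
  refine hne ⟨⟨fun _ => t 2, fun _ => t 0, fun w => (h0 w).symm, fun w => (h2 w).symm⟩, ?_⟩ rfl
  intro a b
  have ha := h0 a
  have hb := h0 b
  subst ha
  subst hb
  simp

theorem not_crossed (hT : ∀ j, (T j).IsTree) (f : model m T t ≃g model m T t)
    (hne : ∀ e : T 0 ≃g T 2, e (t 0) ≠ t 2) (h0 : f (sp W 0) = sp W (Fin.last _))
    (hl : f (sp W (Fin.last _)) = sp W 0) : False := by
  have a0 := f.map_adj_iff.2 (adj_last (T := T) (t := t) (m := m) true)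
  have a1 := f.map_adj_iff.2 (adj_01 (T := T) (t := t) (m := m) true)
  have a2 := f.map_adj_iff.2 (adj_12 (T := T) (t := t) (m := m) true)
  rw [hl] at a0
  rcases nbr_sp a0 with ⟨d, e, hd⟩ | ⟨b, e, _⟩ | ⟨_, _, h⟩
  · rw [e] at a1
    have hd' : d.val = 1 := by simp at hd; omega
    have hdl : d.val ≠ m + 1 := by
      intro h
      have : d = Fin.last _ := Fin.ext h
      rw [this, ← h0] at e
      exact absurd (f.injective e) (by simp)
    rcases nbr_sp a1 with ⟨d1, e1, hd1⟩ | ⟨_, _, h⟩ | ⟨_, _, h⟩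
    · rw [e1] at a2
      have hd1l : d1.val ≠ m + 1 := by
        intro h
        have : d1 = Fin.last _ := Fin.ext h
        rw [this, ← h0] at e1
        exact absurd (f.injective e1) (by simp)
      have hd10 : d1.val ≠ 0 := by
        intro h
        have : d1 = 0 := Fin.ext h
        rw [this, ← hl] at e1
        exact absurd (f.injective e1) (by simp)
      rcases nbr_sp a2 with ⟨d2, e2, hd2⟩ | ⟨_, _, h⟩ | ⟨_, _, h⟩
      · exact not_both_trivial hne (trivial_of_map hT f e) (trivial_of_map hT f e2)
      · exact hd10 h
      · exact hd1l h
    · omega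
    · exact hdl h
  · obtain ⟨g, hg, _⟩ := tree_iso hT f e
    exact hne g hg
  · simp at h

theorem branch_map (hT : ∀ j, (T j).IsTree) (f : model m T t ≃g model m T t)
    (hne : ∀ e : T 0 ≃g T 2, e (t 0) ≠ t 2) (h0 : f (sp W 0) = sp W 0)
    (hl : f (sp W (Fin.last _)) = sp W (Fin.last _)) (b : Bool) :
    ∃ b', ∀ j, f (br m b j (t j)) = br m b' j (t j) := by
  have a0 := f.map_adj_iff.2 (adj_last (T := T) (t := t) (m := m) b)
  have a1 := f.map_adj_iff.2 (adj_01 (T := T) (t := t) (m := m) b)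
  have a2 := f.map_adj_iff.2 (adj_12 (T := T) (t := t) (m := m) b)
  rw [hl] at a0
  rcases nbr_sp a0 with ⟨d, e, hd⟩ | ⟨b, e, h⟩ | ⟨b', e, h⟩
  · exfalso
    rw [e] at a1
    have hdl : d.val ≠ 0 := by
      intro h
      have : d = 0 := Fin.ext h
      rw [this, ← h0] at e
      exact absurd (f.injective e) (by simp)
    have hdm : d.val = m := by simp at hd; omega
    rcases nbr_sp a1 with ⟨d1, e1, hd1⟩ | ⟨_, _, h⟩ | ⟨_, _, h⟩
    · rw [e1] at a2
      have hd1l : d1.val ≠ m + 1 := by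
        intro h
        have : d1 = Fin.last _ := Fin.ext h
        rw [this, ← hl] at e1
        exact absurd (f.injective e1) (by simp)
      have hd10 : d1.val ≠ 0 := by
        intro h
        have : d1 = 0 := Fin.ext h
        rw [this, ← h0] at e1
        exact absurd (f.injective e1) (by simp)
      rcases nbr_sp a2 with ⟨d2, e2, hd2⟩ | ⟨_, _, h⟩ | ⟨_, _, h⟩
      · exact not_both_trivial hne (trivial_of_map hT f e) (trivial_of_map hT f e2)
      · exact hd10 h
      · exact hd1l h
    · exact hdl h
    · omega
  · simp at h
  · rw [e] at a1
    have e1 : f (br m b 1 (t 1)) = br m b' 1 (t 1) := by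
      rcases nbr_br0 a1 (core_map hT f _ (core_br b 1)) with e1 | e1
      · rw [← hl] at e1
        exact absurd (f.injective e1) (by simp)
      · exact e1
    rw [e1] at a2
    have e2 : f (br m b 2 (t 2)) = br m b' 2 (t 2) := by
      rcases nbr_br1 a2 (core_map hT f _ (core_br b 2)) with e2 | e2
      · rw [← e] at e2
        exact absurd (f.injective e2) (by simp)
      · exact e2
    refine ⟨b', fun j => ?_⟩
    fin_cases j
    · exact e
    · exact e1
    · exact e2

theorem classify (hT : ∀ j, (T j).IsTree) (f : model m T t ≃g model m T t)
    (hne : ∀ e : T 0 ≃g T 2, e (t 0) ≠ t 2) :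
    (∀ c, f (sp W c) = sp W c) ∧ ∃ s : Bool, ∀ b j, f (br m b j (t j)) = br m (xor s b) j (t j) := by
  have hlast : (sp W (Fin.last (m + 1)) : MV m W) ≠ sp W 0 := by simp
  obtain ⟨h0, hl⟩ : f (sp W 0) = sp W 0 ∧ f (sp W (Fin.last _)) = sp W (Fin.last _) := by
    rcases map_hub0 hT f with h0 | h0 <;> rcases map_hubl hT f with hl | hl
    · exact absurd (f.injective (hl.trans h0.symm)) hlast
    · exact ⟨h0, hl⟩
    · exact (not_crossed hT f hne h0 hl).elim
    · exact absurd (f.injective (hl.trans h0.symm)) hlast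
  obtain ⟨s, hs⟩ : ∃ s : Bool, ∀ b j, f (br m b j (t j)) = br m (xor s b) j (t j) := by
    obtain ⟨b1, h1⟩ := branch_map hT f hne h0 hl false
    obtain ⟨b2, h2⟩ := branch_map hT f hne h0 hl true
    have hb : b1 ≠ b2 := by
      rintro rfl
      exact absurd (f.injective ((h1 0).trans (h2 0).symm)) (by simp)
    refine ⟨b1, fun b j => ?_⟩
    cases b
    · rw [h1]; simp
    · rw [h2]
      have : b2 = xor b1 true := by revert hb; cases b1 <;> cases b2 <;> simp
      rw [this]
  refine ⟨fun c => ?_, s, hs⟩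
  have nobr : ∀ (c : Fin (m + 2)) (b : Bool) (j : Fin 3), f (sp W c) ≠ br m b j (t j) := by
    intro c b j h
    have h' := hs (xor s b) j
    rw [← Bool.xor_assoc, Bool.xor_self, Bool.false_xor, ← h] at h'
    exact absurd (f.injective h') (by simp)
  obtain ⟨n, hn⟩ := c
  induction n using Nat.strong_induction_on with
  | _ n ih =>
    rcases n with _ | n
    · exact h0
    have ha : (model m T t).Adj (sp W (⟨n, by omega⟩ : Fin (m + 2))) (sp W ⟨n + 1, hn⟩) :=
      adj_path.2 (Or.inl rfl)
    have ha' := f.map_adj_iff.2 ha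
    rw [ih n (by omega)] at ha'
    rcases nbr_sp ha' with ⟨d, e, hd⟩ | ⟨b, e, h⟩ | ⟨b', e, h⟩
    · rcases hd with hd | hd
      · rw [e]; exact congrArg Sum.inl (Fin.ext hd.symm)
      · simp only at hd
        have := ih d.val (by omega) d.2
        have := congrArg Fin.val (Sum.inl.inj (f.injective (this.trans e.symm)))
        simp only at this
        omega
    · exact absurd e (nobr _ _ _)
    · exact absurd e (nobr _ _ _)

end classify

/-- The product of the root stabilizers. -/
abbrev GG (T : ∀ j, SimpleGraph (W j)) (t : ∀ j, W j) : Type :=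
  ↥(autStab (T 0) (t 0)) × ↥(autStab (T 1) (t 1)) × ↥(autStab (T 2) (t 2))

/-- Components of an element of the product. -/
def comp (g : GG T t) : ∀ j : Fin 3, ↥(autStab (T j) (t j))
  | 0 => g.1
  | 1 => g.2.1
  | 2 => g.2.2

theorem comp_mul (g h : GG T t) (j : Fin 3) : comp (g * h) j = comp g j * comp h j := by
  fin_cases j <;> rfl

theorem comp_one (j : Fin 3) : comp (1 : GG T t) j = 1 := by
  fin_cases j <;> rfl

theorem comp_inv (g : GG T t) (j : Fin 3) : comp g⁻¹ j = (comp g j)⁻¹ := by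
  fin_cases j <;> rfl

theorem comp_ext {g h : GG T t} (H : ∀ j, comp g j = comp h j) : g = h :=
  Prod.ext (H 0) (Prod.ext (H 1) (H 2))

/-- The component acting on branch `b`. -/
def pick {G : Type} (p : G × G) (b : Bool) : G := cond b p.1 p.2

/-- The map on vertices. -/
def actFun (p : GG T t × GG T t) : MV m W → MV m W
  | .inl c => .inl c
  | .inr (b, ⟨j, w⟩) => .inr (b, ⟨j, (comp (pick p b) j).1 w⟩)

theorem actFun_mul (p q : GG T t × GG T t) (x : MV m W) :
    actFun (p * q) x = actFun p (actFun q x) := by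
  rcases x with c | ⟨b, j, w⟩
  · rfl
  · have : pick (p * q) b = pick p b * pick q b := by cases b <;> rfl
    simp only [actFun, this, comp_mul]
    rfl

theorem actFun_one (x : MV m W) : actFun (1 : GG T t × GG T t) x = x := by
  rcases x with c | ⟨b, j, w⟩
  · rfl
  · have : pick (1 : GG T t × GG T t) b = 1 := by cases b <;> rfl
    simp only [actFun, this, comp_one]
    rfl

theorem actFun_adj (p : GG T t × GG T t) {x y : MV m W} (h : (model m T t).Adj x y) :
    (model m T t).Adj (actFun p x) (actFun p y) := by
  have hr : ∀ b j, (comp (pick p b) j).1 (t j) = t j := fun b j => (comp (pick p b) j).2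
  cases h with
  | path c d h => exact .path _ _ h
  | tree b j w w' h => exact .tree _ _ _ _ ((comp (pick p b) j).1.map_adj_iff.2 h)
  | spine b i j w w' h h' h'' =>
    subst h; subst h'
    exact .spine _ _ _ _ _ (hr _ _) (hr _ _) h''
  | hub b c j w h h' => subst h; exact .hub _ _ _ _ (hr _ _) h'
  | hub' b c j w h hcj => subst h; exact .hub' _ _ _ _ (hr _ _) hcj

/-- The base group acts on the model. -/
def act (m : ℕ) (T : ∀ j, SimpleGraph (W j)) (t : ∀ j, W j) :
    GG T t × GG T t →* (model m T t ≃g model m T t) where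
  toFun p :=
    { toFun := actFun p
      invFun := actFun p⁻¹
      left_inv := fun x => by rw [← actFun_mul, inv_mul_cancel, actFun_one]
      right_inv := fun x => by rw [← actFun_mul, mul_inv_cancel, actFun_one]
      map_rel_iff' := by
        intro x y
        refine ⟨fun h => ?_, fun h => actFun_adj p h⟩
        have := actFun_adj p⁻¹ h
        simpa [← actFun_mul, actFun_one] using this }
  map_one' := by
    ext x : 1
    exact actFun_one x
  map_mul' p q := by
    ext x : 1
    exact actFun_mul p q x

/-- Branch swap on vertices. -/
def flipFun : MV m W → MV m W
  | .inl c => .inl c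
  | .inr (b, x) => .inr (!b, x)

theorem flipFun_flip (x : MV m W) : flipFun (flipFun x) = x := by
  rcases x with c | ⟨b, x⟩ <;> simp [flipFun]

theorem flipFun_adj {x y : MV m W} (h : (model m T t).Adj x y) :
    (model m T t).Adj (flipFun x) (flipFun y) := by
  cases h with
  | path c d h => exact .path _ _ h
  | tree b j w w' h => exact .tree _ _ _ _ h
  | spine b i j w w' h h' h'' => exact .spine _ _ _ _ _ h h' h''
  | hub b c j w h h' => exact .hub _ _ _ _ h h'
  | hub' b c j w h hcj => exact .hub' _ _ _ _ h hcj

/-- Branch swap. -/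
def flip (m : ℕ) (T : ∀ j, SimpleGraph (W j)) (t : ∀ j, W j) : model m T t ≃g model m T t where
  toFun := flipFun
  invFun := flipFun
  left_inv := flipFun_flip
  right_inv := flipFun_flip
  map_rel_iff' := by
    intro x y
    refine ⟨fun h => ?_, fun h => flipFun_adj h⟩
    have := flipFun_adj h
    simpa [flipFun_flip] using this

theorem flip_mul_flip : flip m T t * flip m T t = 1 := by
  ext x : 1
  exact flipFun_flip x

/-- The action of `Z₂`. -/
def flipHom (m : ℕ) (T : ∀ j, SimpleGraph (W j)) (t : ∀ j, W j) :
    Multiplicative (ZMod 2) →* (model m T t ≃g model m T t) where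
  toFun g := if Multiplicative.toAdd g = 1 then flip m T t else 1
  map_one' := by
    show (if (0 : ZMod 2) = 1 then flip m T t else 1) = 1
    norm_num
  map_mul' x y := by
    have h2 : ∀ z : ZMod 2, z = 0 ∨ z = 1 := by decide
    show (if Multiplicative.toAdd x + Multiplicative.toAdd y = 1 then _ else _) = _
    rcases h2 (Multiplicative.toAdd x) with hx | hx <;>
      rcases h2 (Multiplicative.toAdd y) with hy | hy <;>
        simp [hx, hy, flip_mul_flip, show (1 + 1 : ZMod 2) = 0 from rfl,
          show (0 : ZMod 2) ≠ 1 by decide]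

theorem zcases (z : Multiplicative (ZMod 2)) : z = 1 ∨ z = Multiplicative.ofAdd 1 := by
  revert z; decide

theorem flipHom_gen : flipHom m T t (Multiplicative.ofAdd 1) = flip m T t := by
  simp [flipHom]

theorem swapHom_gen {G : Type} [Group G] (p : G × G) :
    swapHom G (Multiplicative.ofAdd 1) p = p.swap := by
  simp [swapHom]

theorem flip_conj (p : GG T t × GG T t) :
    act m T t p.swap = flip m T t * act m T t p * (flip m T t)⁻¹ := by
  rw [eq_mul_inv_iff_mul_eq]
  ext x : 1
  rcases x with c | ⟨b, j, w⟩
  · rfl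
  · cases b <;> rfl

/-- The wreath product acts on the model. -/
def wreathHom (m : ℕ) (T : ∀ j, SimpleGraph (W j)) (t : ∀ j, W j) :
    (GG T t × GG T t) ⋊[swapHom (GG T t)] Multiplicative (ZMod 2) →*
      (model m T t ≃g model m T t) :=
  SemidirectProduct.lift (act m T t) (flipHom m T t) (by
    intro z
    ext p : 1
    rcases zcases z with rfl | rfl
    · simp
    · simp only [MonoidHom.comp_apply, MulEquiv.coe_toMonoidHom, MulAut.conj_apply, swapHom_gen,
        flipHom_gen]
      exact flip_conj p)

theorem act_br (p : GG T t × GG T t) (b : Bool) (j : Fin 3) (w : W j) :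
    act m T t p (br m b j w) = br m b j ((comp (pick p b) j).1 w) := rfl

theorem wreathHom_apply (p : GG T t × GG T t) (z : Multiplicative (ZMod 2)) :
    wreathHom m T t ⟨p, z⟩ = act m T t p * flipHom m T t z := rfl

theorem act_injective (p : GG T t × GG T t) (h : act m T t p = 1) : p = 1 := by
  have key : ∀ b, pick p b = 1 := by
    intro b
    apply comp_ext
    intro j
    rw [comp_one]
    apply Subtype.ext
    ext w : 1
    have h1 : act m T t p (br m b j w) = br m b j w := by rw [h]; rfl
    rw [act_br] at h1
    simpa [br] using h1
  exact Prod.ext (key true) (key false)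

theorem wreathHom_injective : Function.Injective (wreathHom m T t) := by
  rw [injective_iff_map_eq_one]
  rintro ⟨p, z⟩ h
  rw [wreathHom_apply] at h
  rcases zcases z with rfl | rfl
  · rw [map_one, mul_one] at h
    rw [act_injective p h]
    rfl
  · exfalso
    rw [flipHom_gen] at h
    have h1 : (act m T t p * flip m T t) (br m true 0 (t 0)) = br m true 0 (t 0) := by
      rw [h]; rfl
    change br m false 0 _ = _ at h1
    simp at h1

theorem exists_act [∀ j, Finite (W j)] (hT : ∀ j, (T j).IsTree)
    (f : model m T t ≃g model m T t) (hc : ∀ c, f (sp W c) = sp W c)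
    (hb : ∀ b j, f (br m b j (t j)) = br m b j (t j)) : ∃ p, act m T t p = f := by
  choose e he hf using fun b j => tree_iso hT f (hb b j)
  let g : Bool → GG T t := fun b => (⟨e b 0, he b 0⟩, ⟨e b 1, he b 1⟩, ⟨e b 2, he b 2⟩)
  have hg : ∀ b j, (comp (g b) j).1 = e b j := by
    intro b j
    fin_cases j <;> rfl
  refine ⟨(g true, g false), ?_⟩
  ext x : 1
  rcases x with c | ⟨b, j, w⟩
  · exact (hc c).symm
  · have hp : pick (g true, g false) b = g b := by cases b <;> rfl
    change act m T t _ (br m b j w) = f (br m b j w)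
    rw [act_br, hf, hp, hg]

theorem wreathHom_surjective [∀ j, Finite (W j)] (hT : ∀ j, (T j).IsTree)
    (hne : ∀ e : T 0 ≃g T 2, e (t 0) ≠ t 2) : Function.Surjective (wreathHom m T t) := by
  intro f
  obtain ⟨hc, s, hs⟩ := classify hT f hne
  cases s
  · obtain ⟨p, hp⟩ := exists_act hT f hc (by simpa using hs)
    refine ⟨⟨p, 1⟩, ?_⟩
    rw [wreathHom_apply, map_one, mul_one, hp]
  · obtain ⟨p, hp⟩ := exists_act hT (f * flip m T t) hc (by
      intro b j
      change f (br m (!b) j (t j)) = _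
      rw [hs]; simp)
    refine ⟨⟨p, Multiplicative.ofAdd 1⟩, ?_⟩
    rw [wreathHom_apply, flipHom_gen, hp, mul_assoc, flip_mul_flip, mul_one]

/-- The automorphism group of the model. -/
theorem model_aut [∀ j, Finite (W j)] (hT : ∀ j, (T j).IsTree)
    (hne : ∀ e : T 0 ≃g T 2, e (t 0) ≠ t 2) :
    Nonempty ((model m T t ≃g model m T t) ≃* wreathZ2 (GG T t)) :=
  ⟨(MulEquiv.ofBijective (wreathHom m T t)
    ⟨wreathHom_injective, wreathHom_surjective hT hne⟩).symm⟩

/-- Isomorphic graphs have isomorphic automorphism groups. -/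
def autCongr {V V' : Type} {G : SimpleGraph V} {H : SimpleGraph V'} (e : G ≃g H) :
    (G ≃g G) ≃* (H ≃g H) where
  toFun f := (e.symm.trans f).trans e
  invFun f := (e.trans f).trans e.symm
  left_inv f := by ext x : 1; simp [RelIso.trans_apply]
  right_inv f := by ext x : 1; simp [RelIso.trans_apply]
  map_mul' f g := by
    ext x : 1
    change e (f (g (e.symm x))) = e (f (e.symm (e (g (e.symm x)))))
    rw [RelIso.symm_apply_apply]

section toModel

variable {WB : Fin 3 → Type} {TB : ∀ j, SimpleGraph (WB j)} {tB : ∀ j, WB j}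

/-- The comparison map from the vertices of the bicyclic graph to the model. -/
def toM (m : ℕ) (T : ∀ j, SimpleGraph (W j)) (TB : ∀ j, SimpleGraph (WB j))
    (t : ∀ j, W j) (tB : ∀ j, WB j) (e : ∀ j, T j ≃g TB j) :
    (ThetaV 3 3 m ⊕ Σ i, {w : stmt4W W WB i // w ≠ stmt4root t tB i}) → MV m W
  | .inl .u => sp W (Fin.last _)
  | .inl .v => sp W 0
  | .inl (.x1 i) => br m true ⟨2 - i.1, by omega⟩ (t _)
  | .inl (.x2 i) => br m false ⟨2 - i.1, by omega⟩ (t _)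
  | .inl (.x3 i) => sp W ⟨i.1 + 1, by omega⟩
  | .inr ⟨.inl j, w⟩ => br m true j w.1
  | .inr ⟨.inr j, w⟩ => br m false j ((e j).symm w.1)

theorem br_t_eq {b b' : Bool} {i j : Fin 3} {w : W j}
    (h : br m b i (t i) = br m b' j w) : b = b' ∧ i = j ∧ w = t j := by
  cases h
  exact ⟨rfl, rfl, rfl⟩

theorem br_eq {b b' : Bool} {i j : Fin 3} {w : W i} {w' : W j}
    (h : br m b i w = br m b' j w') : b = b' ∧ ∃ h : i = j, h ▸ w = w' := by
  cases h
  exact ⟨rfl, rfl, rfl⟩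

theorem toM_injective (e : ∀ j, T j ≃g TB j) (he : ∀ j, e j (t j) = tB j) :
    Function.Injective (toM m T TB t tB e) := by
  have hs : ∀ j (w : WB j), w ≠ tB j → (e j).symm w ≠ t j := by
    intro j w hw h
    apply hw
    rw [← he j, ← h]
    simp
  have hsp : ∀ c d : Fin (m + 2), sp W c = sp W d → c.val = d.val := by
    intro c d h
    exact congrArg Fin.val (Sum.inl.inj h)
  rintro ((_ | _ | i | i | i) | ⟨j | j, w, hw⟩) ((_ | _ | i' | i' | i') | ⟨j' | j', w', hw'⟩) h <;>
    first
    | rfl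
    | (exfalso; cases h; done)
    | (exfalso; exact absurd (br_t_eq h).1 (by decide))
    | (exfalso; exact absurd (br_t_eq h.symm).1 (by decide))
    | (exfalso; exact absurd (br_eq h).1 (by decide))
    | (exfalso; exact hw' (br_t_eq h).2.2)
    | (exfalso; exact hw (br_t_eq h.symm).2.2)
    | (exfalso; exact hs _ _ hw' (br_t_eq h).2.2)
    | (exfalso; exact hs _ _ hw (br_t_eq h.symm).2.2)
    | (exfalso; have := hsp _ _ h; simp at this; done)
    | (exfalso; have := hsp _ _ h; simp at this; omega)
    | skip
  · have := congrArg Fin.val (br_t_eq h).2.1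
    obtain rfl : i = i' := Fin.ext (by simp at this; omega)
    rfl
  · have := congrArg Fin.val (br_t_eq h).2.1
    obtain rfl : i = i' := Fin.ext (by simp at this; omega)
    rfl
  · have := hsp _ _ h
    obtain rfl : i = i' := Fin.ext (by simpa using this)
    rfl
  · obtain ⟨_, rfl, rfl⟩ := br_eq h
    rfl
  · obtain ⟨_, rfl, h2⟩ := br_eq h
    obtain rfl : w = w' := (e j).symm.injective h2
    rfl

theorem toM_surjective (e : ∀ j, T j ≃g TB j) (he : ∀ j, e j (t j) = tB j) :
    Function.Surjective (toM m T TB t tB e) := by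
  rintro (c | ⟨b, j, w⟩)
  · by_cases h0 : c.val = 0
    · exact ⟨.inl .v, congrArg Sum.inl (Fin.ext h0.symm)⟩
    by_cases h1 : c.val = m + 1
    · exact ⟨.inl .u, congrArg Sum.inl (Fin.ext h1.symm)⟩
    · refine ⟨.inl (.x3 ⟨c.val - 1, by omega⟩), congrArg Sum.inl (Fin.ext ?_)⟩
      simp only
      omega
  · by_cases hw : w = t j
    · subst hw
      cases b
      · refine ⟨.inl (.x2 ⟨2 - j.1, by omega⟩), ?_⟩
        fin_cases j <;> rfl
      · refine ⟨.inl (.x1 ⟨2 - j.1, by omega⟩), ?_⟩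
        fin_cases j <;> rfl
    · cases b
      · refine ⟨.inr ⟨.inr j, ⟨e j w, ?_⟩⟩, ?_⟩
        · intro h
          exact hw ((e j).injective (h.trans (he j).symm))
        · change br m false j ((e j).symm (e j w)) = _
          rw [RelIso.symm_apply_apply]
      · exact ⟨.inr ⟨.inl j, ⟨w, hw⟩⟩, rfl⟩

theorem adj_tt {b b' : Bool} {i j : Fin 3} :
    (model m T t).Adj (br m b i (t i)) (br m b' j (t j)) ↔
      b = b' ∧ (i.val + 1 = j.val ∨ j.val + 1 = i.val) := by
  constructor
  · intro h
    obtain rfl := adj_bool h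
    refine ⟨rfl, ?_⟩
    by_cases hij : i = j
    · subst hij
      exact absurd rfl h.ne
    · exact ((adj_spine hij).1 h).2.2
  · rintro ⟨rfl, h⟩
    exact .spine _ _ _ _ _ rfl rfl h

theorem adj_tw {b b' : Bool} {i j : Fin 3} {w : W j} (hw : w ≠ t j) :
    (model m T t).Adj (br m b i (t i)) (br m b' j w) ↔ b = b' ∧ i = j ∧ (T j).Adj (t j) w := by
  constructor
  · intro h
    obtain rfl := adj_bool h
    refine ⟨rfl, ?_⟩
    by_cases hij : i = j
    · subst hij
      exact ⟨rfl, adj_tree.1 h⟩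
    · exact absurd ((adj_spine hij).1 h).2.1 hw
  · rintro ⟨rfl, rfl, h⟩
    exact adj_tree.2 h

theorem adj_ww {b b' : Bool} {i j : Fin 3} {w : W i} {w' : W j} (hw : w ≠ t i) :
    (model m T t).Adj (br m b i w) (br m b' j w') ↔
      b = b' ∧ ∃ h : i = j, (T j).Adj (h ▸ w) w' := by
  constructor
  · intro h
    obtain rfl := adj_bool h
    refine ⟨rfl, ?_⟩
    by_cases hij : i = j
    · subst hij
      exact ⟨rfl, adj_tree.1 h⟩
    · exact absurd ((adj_spine hij).1 h).1 hw
  · rintro ⟨rfl, rfl, h⟩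
    exact adj_tree.2 h

/-- Adjacency in the base (theta) part. -/
theorem toM_adj_base (e : ∀ j, T j ≃g TB j) (x y : ThetaV 3 3 m) :
    (model m T t).Adj (toM m T TB t tB e (.inl x)) (toM m T TB t tB e (.inl y)) ↔
      (theta 3 3 m).Adj x y := by
  have hub' : ∀ (b : Bool) (c : Fin (m + 2)) (j : Fin 3),
      (model m T t).Adj (br m b j (t j)) (sp W c) ↔
      ((c.val = 0 ∧ j.val = 2) ∨ (c.val = m + 1 ∧ j.val = 0)) := by
    intro b c j
    rw [SimpleGraph.adj_comm, adj_hub]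
    simp
  rcases x with _ | _ | i | i | i <;> rcases y with _ | _ | i' | i' | i' <;>
    simp only [toM, adj_path, adj_hub, adj_tt, hub', theta] <;> simp <;> omega

theorem toM_adj_mixed (e : ∀ j, T j ≃g TB j) (he : ∀ j, e j (t j) = tB j) (x : ThetaV 3 3 m)
    (y : Σ i, {w : stmt4W W WB i // w ≠ stmt4root t tB i}) :
    (model m T t).Adj (toM m T TB t tB e (.inl x)) (toM m T TB t tB e (.inr y)) ↔
      (stmt4Graph m T TB t tB).Adj (.inl x) (.inr y) := by
  have hs : ∀ j (w : WB j), w ≠ tB j → (e j).symm w ≠ t j := by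
    intro j w hw h
    apply hw
    rw [← he j, ← h]
    simp
  have hadj : ∀ j (w : WB j), (T j).Adj (t j) ((e j).symm w) ↔ (TB j).Adj (tB j) w := by
    intro j w
    rw [← (e j).map_adj_iff, he]
    simp
  have hfin : ∀ (i j : Fin 3),
      (⟨2 - i.1, by omega⟩ : Fin 3) = j ↔ i = ⟨2 - j.1, by omega⟩ := by
    decide
  rcases y with ⟨j | j, w, hw⟩
  · change W j at w
    change _ ↔ x = ThetaV.x1 ⟨2 - j.1, _⟩ ∧ (T j).Adj (t j) w
    have hw' : w ≠ t j := hw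
    rcases x with _ | _ | i | i | i <;> simp only [toM] <;>
      simp [adj_hub, adj_tw hw', hw', hfin]
  · change WB j at w
    change _ ↔ x = ThetaV.x2 ⟨2 - j.1, _⟩ ∧ (TB j).Adj (tB j) w
    have hw' := hs j w hw
    rcases x with _ | _ | i | i | i <;> simp only [toM] <;>
      simp [adj_hub, adj_tw hw', hw', hfin, hadj]

theorem toM_adj_trees (e : ∀ j, T j ≃g TB j) (he : ∀ j, e j (t j) = tB j)
    (x y : Σ i, {w : stmt4W W WB i // w ≠ stmt4root t tB i}) :
    (model m T t).Adj (toM m T TB t tB e (.inr x)) (toM m T TB t tB e (.inr y)) ↔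
      (stmt4Graph m T TB t tB).Adj (.inr x) (.inr y) := by
  have hs : ∀ j (w : WB j), w ≠ tB j → (e j).symm w ≠ t j := by
    intro j w hw h
    apply hw
    rw [← he j, ← h]
    simp
  rcases x with ⟨i | i, w, hw⟩ <;> rcases y with ⟨j | j, w', hw'⟩ 
  · refine (adj_ww hw).trans ?_
    constructor
    · rintro ⟨_, rfl, h⟩
      exact ⟨rfl, h⟩
    · rintro ⟨h, h'⟩
      cases h
      exact ⟨rfl, rfl, h'⟩
  · refine (adj_ww hw).trans ?_
    constructor
    · rintro ⟨h, _⟩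
      cases h
    · rintro ⟨h, h'⟩
      cases h
  · refine (adj_ww (hs _ _ hw)).trans ?_
    constructor
    · rintro ⟨h, _⟩
      cases h
    · rintro ⟨h, h'⟩
      cases h
  · refine (adj_ww (hs _ _ hw)).trans ?_
    constructor
    · rintro ⟨_, rfl, h⟩
      exact ⟨rfl, (e i).symm.map_adj_iff.1 h⟩
    · rintro ⟨h, h'⟩
      cases h
      exact ⟨rfl, rfl, (e i).symm.map_adj_iff.2 h'⟩

theorem toM_adj (e : ∀ j, T j ≃g TB j) (he : ∀ j, e j (t j) = tB j)
    (x y : ThetaV 3 3 m ⊕ Σ i, {w : stmt4W W WB i // w ≠ stmt4root t tB i}) :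
    (model m T t).Adj (toM m T TB t tB e x) (toM m T TB t tB e y) ↔
      (stmt4Graph m T TB t tB).Adj x y := by
  rcases x with x | x <;> rcases y with y | y
  · exact toM_adj_base e x y
  · exact toM_adj_mixed e he x y
  · rw [SimpleGraph.adj_comm, toM_adj_mixed e he y x, SimpleGraph.adj_comm]
  · exact toM_adj_trees e he x y

end toModel

end SixTrees

/-- Lemma 2.4. With `T₁ ≅ T₂`, `T₃ ≅ T₄`, `T₅ ≅ T₆` as rooted trees,
`T₁ ≇ T₅` as rooted trees, and `ℓ ≠ 4` or one of `T₁, T₃, T₅` nontrivial, the automorphism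
group of `Δ` is `(G₁ × G₂ × G₃) ≀ Z₂` with `G₁ = Aut(T₁)_root`, `G₂ = Aut(T₃)_root`,
`G₃ = Aut(T₅)_root`. -/
theorem aut_bicyclic_six_trees
    (m : ℕ) {WA WB : Fin 3 → Type} [∀ j, Fintype (WA j)] [∀ j, Fintype (WB j)]
    (TA : ∀ j, SimpleGraph (WA j)) (TB : ∀ j, SimpleGraph (WB j))
    (tA : ∀ j, WA j) (tB : ∀ j, WB j)
    (hAtree : ∀ j, (TA j).IsTree) (hBtree : ∀ j, (TB j).IsTree)
    (hiso : ∀ j, ∃ e : TA j ≃g TB j, e (tA j) = tB j)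
    (hne : ∀ e : TA 0 ≃g TA 2, e (tA 0) ≠ tA 2)
    (hside : m + 1 ≠ 4 ∨ Nontrivial (WA 0) ∨ Nontrivial (WA 1) ∨ Nontrivial (WA 2)) :
    Nonempty ((stmt4Graph m TA TB tA tB ≃g stmt4Graph m TA TB tA tB) ≃*
      wreathZ2 (↥(autStab (TA 0) (tA 0)) × ↥(autStab (TA 1) (tA 1)) ×
        ↥(autStab (TA 2) (tA 2)))) := by
  choose e he using hiso
  have ι : stmt4Graph m TA TB tA tB ≃g SixTrees.model m TA tA :=
    ⟨Equiv.ofBijective (SixTrees.toM m TA TB tA tB e)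
      ⟨SixTrees.toM_injective e he, SixTrees.toM_surjective e he⟩,
      fun {x y} => SixTrees.toM_adj e he x y⟩
  obtain ⟨E⟩ := SixTrees.model_aut (m := m) hAtree hne
  exact ⟨(SixTrees.autCongr ι).trans E⟩
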